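/- For every superlinear function g : ℕ → ℕ and every α ≥ 1, there exist η, γ' ∈ (0,1) such that for the subtractive adversary V_{sub,η} the following holds: for every m ≥ 1 there exist a distribution p ∈ C_g and a meta-distribution Q over C_g such that (i) d_TV(p,q) ≥ 4α·η + 4γ' for every q in the support of Q, and (ii) d_TV(V_{sub,η}(p^m), V_{sub,η}(|Q|^m)) ≤ 1/8. -/

import Mathlib

open scoped ENNReal NNReal

/-- Total variation distance between two discrete distributions. -/
noncomputable def tv {X : Type*} (p q : PMF X) : ℝ :=
  (∑' x, |(p x).toReal - (q x).toReal|) / 2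

/-- The distribution of an i.i.d. sample of size `m` from `p`, viewed as a multiset. -/
noncomputable def iid {X : Type*} (p : PMF X) : ℕ → PMF (Multiset X)
  | 0 => PMF.pure 0
  | n + 1 => (iid p n).bind fun s => p.map fun x => x ::ₘ s

/-- `|Q|^m` : first draw `q ∼ Q`, then an i.i.d. sample `S ∼ q^m`. -/
noncomputable def metaSample {X : Type*} (Q : PMF (PMF X)) (m : ℕ) : PMF (Multiset X) :=
  Q.bind fun q => iid q m

/-- An adaptive adversary: a randomized map from samples (finite multisets) to samples. -/
abbrev Adversary (X : Type*) := Multiset X → PMF (Multiset X)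

/-- `V(P)`: the distribution of `V S` for `S ∼ P` (including internal randomness). -/
noncomputable def advPush {X : Type*} (V : Adversary X) (P : PMF (Multiset X)) :
    PMF (Multiset X) := P.bind V

/-- An additive adversary only adds points: `S ⊆ V(S)` almost surely. -/
def IsAdditive {X : Type*} (V : Adversary X) : Prop :=
  ∀ S T, T ∈ (V S).support → S ≤ T

/-- A subtractive adversary only removes points: `V(S) ⊆ S` almost surely. -/
def IsSubtractive {X : Type*} (V : Adversary X) : Prop :=
  ∀ S T, T ∈ (V S).support → T ≤ S

/-- Fixed constant budget `η`: `|V(S)|` depends only on `|S|` (via `c`), and for every `m`,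
`η m − 1 < m·budget(V,m) ≤ η m` where `m·budget(V,m) = ||V(S)| − |S||`. -/
def FixedBudget {X : Type*} (V : Adversary X) (η : ℝ) : Prop :=
  ∃ c : ℕ → ℕ, (∀ S T, T ∈ (V S).support → Multiset.card T = c (Multiset.card S)) ∧
    ∀ m : ℕ, η * m - 1 < |(c m : ℝ) - m| ∧ |(c m : ℝ) - m| ≤ η * m

/-- Fixed constant budget `η` for an additive adversary (`m·budget(V,m) = |V(S)| − |S|`). -/
def FixedBudgetAdd {X : Type*} (V : Adversary X) (η : ℝ) : Prop :=
  ∃ c : ℕ → ℕ, (∀ S T, T ∈ (V S).support → Multiset.card T = c (Multiset.card S)) ∧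
    ∀ m : ℕ, η * m - 1 < (c m : ℝ) - m ∧ (c m : ℝ) - m ≤ η * m

/-- Fixed constant budget `η` for a subtractive adversary (`m·budget(V,m) = |S| − |V(S)|`). -/
def FixedBudgetSub {X : Type*} (V : Adversary X) (η : ℝ) : Prop :=
  ∃ c : ℕ → ℕ, (∀ S T, T ∈ (V S).support → Multiset.card T = c (Multiset.card S)) ∧
    ∀ m : ℕ, η * m - 1 < (m : ℝ) - c m ∧ (m : ℝ) - c m ≤ η * m

/-- Probability of an event under a discrete distribution. -/
noncomputable def probEvent {β : Type*} (P : PMF β) (E : Set β) : ℝ≥0∞ :=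
  P.toOuterMeasure E

/-- `A` with sample complexity `mc` learns the class `C` against adversary `V`,
up to error `bound + ε` with confidence `1 − δ` once `m ≥ mc ε δ`. -/
def RobustLearnerFor {X : Type*} (C : Set (PMF X)) (A : Multiset X → PMF X)
    (mc : ℝ → ℝ → ℕ) (V : Adversary X) (bound : ℝ) : Prop :=
  ∀ p ∈ C, ∀ ε δ : ℝ, 0 < ε → ε < 1 → 0 < δ → δ < 1 →
    ∀ m : ℕ, mc ε δ ≤ m →
      1 - ENNReal.ofReal δ ≤
        probEvent ((iid p m).bind V) {T | tv (A T) p ≤ bound + ε}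

/-- `C` is adaptively α-robustly learnable w.r.t. the single adversary `V` with budget `η`. -/
def RobustlyLearnableWrt {X : Type*} (C : Set (PMF X)) (α : ℝ)
    (V : Adversary X) (η : ℝ) : Prop :=
  ∃ A mc, RobustLearnerFor C A mc V (α * η)

/-- `V` (with budget `η`) is a universal α-adversary for `C`. -/
def UniversalAdversary {X : Type*} (C : Set (PMF X)) (α : ℝ)
    (V : Adversary X) (η : ℝ) : Prop :=
  ¬ RobustlyLearnableWrt C α V η

/-- `C` is adaptively α-robustly learnable w.r.t. a class `𝒱` of adversaries
(each given with its budget). -/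
def RobustlyLearnableWrtClass {X : Type*} (C : Set (PMF X)) (α : ℝ)
    (𝒱 : Set (Adversary X × ℝ)) : Prop :=
  ∃ A mc, ∀ Vη ∈ 𝒱, RobustLearnerFor C A mc Vη.1 (α * Vη.2)

/-- `C` is adaptively additively α-robustly learnable: one learner works simultaneously
against all additive adaptive adversaries with fixed constant budgets. -/
def AdditivelyRobustlyLearnable {X : Type*} (C : Set (PMF X)) (α : ℝ) : Prop :=
  ∃ A mc, ∀ V : Adversary X, ∀ η : ℝ, 0 < η → η < 1 →
    IsAdditive V → FixedBudgetAdd V η → RobustLearnerFor C A mc V (α * η)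

/-- `C` is adaptively subtractively α-robustly learnable. -/
def SubtractivelyRobustlyLearnable {X : Type*} (C : Set (PMF X)) (α : ℝ) : Prop :=
  ∃ A mc, ∀ V : Adversary X, ∀ η : ℝ, 0 < η → η < 1 →
    IsSubtractive V → FixedBudgetSub V η → RobustLearnerFor C A mc V (α * η)

/-- The pair `(V1, V2)` successfully `(γ,ζ)`-confuses `C`-generated samples of size `m`. -/
def ConfusesPair {X : Type*} (C : Set (PMF X)) (V1 V2 : Adversary X)
    (γ ζ : ℝ) (m : ℕ) : Prop :=
  ∃ p ∈ C, ∃ Q : PMF (PMF X), Q.support ⊆ C ∧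
    (∀ q ∈ Q.support, γ < tv p q) ∧
    tv (advPush V1 (metaSample Q m)) (advPush V2 (iid p m)) < ζ

/-- A single adversary `V` successfully `(γ,ζ)`-confuses `C`-generated samples of size `m`. -/
def Confuses {X : Type*} (C : Set (PMF X)) (V : Adversary X) (γ ζ : ℝ) (m : ℕ) : Prop :=
  ConfusesPair C V V γ ζ m

/-- `p` is the distribution `p_{i,j,k} = (1 − 1/j)·δ_{(0,0)} + (1/j − 1/k)·U_{B_i×{2j+1}}
 + (1/k)·δ_{(i,2j+2)}` on `ℕ × ℕ`. -/
def IsPijk (B : ℕ → Finset ℕ) (i j k : ℕ) (p : PMF (ℕ × ℕ)) : Prop :=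
  ∀ x : ℕ × ℕ,
    p x = (1 - ((j : ℝ≥0∞))⁻¹) * (if x = (0, 0) then 1 else 0)
      + (((j : ℝ≥0∞))⁻¹ - ((k : ℝ≥0∞))⁻¹) *
          (if x.1 ∈ B i ∧ x.2 = 2 * j + 1 then (((B i).card : ℝ≥0∞))⁻¹ else 0)
      + ((k : ℝ≥0∞))⁻¹ * (if x = (i, 2 * j + 2) then 1 else 0)

/-- The class `C_g = {p_{i,j,g(j)} : i, j ∈ ℕ}` (for the meaningful parameters). -/
def Cg (B : ℕ → Finset ℕ) (g : ℕ → ℕ) : Set (PMF (ℕ × ℕ)) :=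
  {p | ∃ i j : ℕ, 1 ≤ j ∧ j < g j ∧ (B i).Nonempty ∧ IsPijk B i j (g j) p}

/-- `g` is superlinear: `g(n)/n → ∞`. -/
def Superlinear (g : ℕ → ℕ) : Prop :=
  Filter.Tendsto (fun n => (g n : ℝ) / n) Filter.atTop Filter.atTop

/-- The indicator part of a sample: elements `(i, 2j+2)`, i.e. second coordinate even, `≥ 2`. -/
def indS (S : Multiset (ℕ × ℕ)) : Multiset (ℕ × ℕ) :=
  S.filter (fun x => x.2 % 2 = 0 ∧ 2 ≤ x.2)

/-- The non-indicator part of a sample. -/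
def noindS (S : Multiset (ℕ × ℕ)) : Multiset (ℕ × ℕ) :=
  S.filter (fun x => ¬ (x.2 % 2 = 0 ∧ 2 ≤ x.2))

/-- The subtractive adversary `V_{sub,η}`: it removes `⌊η|S|⌋` elements, as many of them
as possible from `ind(S)`; remaining removals are uniformly random.  (Uniform choice of a
sub-multiset of prescribed size is realized via `Multiset.powersetCard`.) -/
noncomputable def Vsub (η : ℝ) : Adversary (ℕ × ℕ) := fun S =>
  let m := Multiset.card S
  let n := ⌊η * m⌋₊
  if Multiset.card (indS S) ≤ n then
    if h2 : Multiset.powersetCard (m - n) (noindS S) = 0 then PMF.pure S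
    else PMF.ofMultiset _ h2
  else
    if h2 : Multiset.powersetCard (Multiset.card (indS S) - n) (indS S) = 0 then PMF.pure S
    else (PMF.ofMultiset _ h2).map (fun T => noindS S + T)

/-! A sample of size `m` from a distribution of the form `U_{Ω × {0,1}}` and one from
`U_{graph f}`, for a uniformly random function `f : Ω → {0,1}`, are nearly indistinguishable once
`|Ω| ≫ m²`: by the birthday bound the sampled points of `Ω` are pairwise distinct, and then the
values of `f` at them are fair coin flips. In `C_g` the two are told apart only by the indicators,
each of which has probability `1/g(j)`. For `j/g(j)` small and `η` of order `1/j`, Markov's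
inequality shows that there are at most `ηm` indicators with high probability, and then the
adversary removes all of them. Nevertheless every graph has half the size of `Ω × {0,1}`, so the
distributions are at distance at least `(1/j - 1/g(j))/2 ≥ 1/(4j)`, which exceeds a prescribed
multiple of `η`. -/

/-- The total variation distance as an extended nonnegative real, `∑ₓ (p x - q x)⁺`; the truncated
subtraction of `ℝ≥0∞` is the positive part. Working with it avoids all summability conditions. -/
noncomputable def etv {X : Type*} (p q : PMF X) : ℝ≥0∞ := ∑' x, (p x - q x)

/-- The expectation of a nonnegative function under a discrete distribution. -/
noncomputable def expect {X : Type*} (P : PMF X) (f : X → ℝ≥0∞) : ℝ≥0∞ := ∑' x, P x * f x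

section Expect

variable {X Y : Type*}

lemma expect_mono (P : PMF X) {f f' : X → ℝ≥0∞} (h : ∀ x ∈ P.support, f x ≤ f' x) :
    expect P f ≤ expect P f' := by
  refine ENNReal.tsum_le_tsum fun x => ?_
  by_cases hx : x ∈ P.support
  · gcongr
    exact h x hx
  · simp [P.apply_eq_zero_iff x |>.2 hx]

lemma expect_const (P : PMF X) (c : ℝ≥0∞) : expect P (fun _ => c) = c := by
  rw [expect, ENNReal.tsum_mul_right, P.tsum_coe, one_mul]

lemma expect_const_add (P : PMF X) (c : ℝ≥0∞) (f : X → ℝ≥0∞) :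
    expect P (fun x => c + f x) = c + expect P f := by
  simp only [expect, mul_add, ENNReal.tsum_add, ENNReal.tsum_mul_right, P.tsum_coe, one_mul]

lemma expect_add_const (P : PMF X) (f : X → ℝ≥0∞) (c : ℝ≥0∞) :
    expect P (fun x => f x + c) = expect P f + c := by
  simpa only [add_comm] using expect_const_add P c f

lemma expect_indicator_one (P : PMF X) (E : Set X) :
    expect P (E.indicator 1) = P.toOuterMeasure E := by
  rw [expect, P.toOuterMeasure_apply]
  congr with x
  by_cases hx : x ∈ E <;> simp [hx]

lemma expect_pure (a : X) (f : X → ℝ≥0∞) : expect (PMF.pure a) f = f a := by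
  rw [expect, tsum_eq_single a fun x hx => by simp [hx]]
  simp

lemma expect_bind (P : PMF X) (K : X → PMF Y) (f : Y → ℝ≥0∞) :
    expect (P.bind K) f = expect P fun x => expect (K x) f := by
  simp only [expect, PMF.bind_apply, ← ENNReal.tsum_mul_right, ← ENNReal.tsum_mul_left]
  rw [ENNReal.tsum_comm]
  simp only [mul_assoc]

lemma expect_map (P : PMF X) (h : X → Y) (f : Y → ℝ≥0∞) :
    expect (P.map h) f = expect P (f ∘ h) := by
  simp only [← PMF.bind_pure_comp, expect_bind, Function.comp_def, expect_pure]

lemma toOuterMeasure_le_expect_div (P : PMF X) (f : X → ℝ≥0∞) {c : ℝ≥0∞} (hc₀ : c ≠ 0)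
    (hc : c ≠ ⊤) : P.toOuterMeasure {x | c ≤ f x} ≤ expect P f / c := by
  rw [ENNReal.le_div_iff_mul_le (.inl hc₀) (.inl hc), ← expect_indicator_one, expect, expect,
    ← ENNReal.tsum_mul_right]
  refine ENNReal.tsum_le_tsum fun x => ?_
  rw [mul_assoc]
  gcongr
  by_cases hx : c ≤ f x <;> simp [hx]

end Expect

section TotalVariation

variable {X Y : Type*}

lemma etv_comm (p q : PMF X) : etv p q = etv q p := by
  have h : 1 + etv p q = 1 + etv q p := by
    rw [← q.tsum_coe, etv, ← ENNReal.tsum_add, q.tsum_coe, ← p.tsum_coe, etv, ← ENNReal.tsum_add]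
    simp only [add_tsub_eq_max, max_comm]
  exact (ENNReal.add_right_inj ENNReal.one_ne_top).1 h

lemma etv_le_one (p q : PMF X) : etv p q ≤ 1 :=
  p.tsum_coe ▸ ENNReal.tsum_le_tsum fun _ => tsub_le_self

lemma etv_self (p : PMF X) : etv p p = 0 := by simp [etv]

lemma etv_ne_top (p q : PMF X) : etv p q ≠ ⊤ :=
  ne_top_of_le_ne_top ENNReal.one_ne_top (etv_le_one p q)

lemma etv_triangle (p q r : PMF X) : etv p r ≤ etv p q + etv q r := by
  rw [etv, etv, etv, ← ENNReal.tsum_add]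
  exact ENNReal.tsum_le_tsum fun _ => tsub_le_tsub_add_tsub

lemma tv_eq_toReal_etv (p q : PMF X) : tv p q = (etv p q).toReal := by
  have hfin (p q : PMF X) (x : X) : p x - q x ≠ ⊤ := ENNReal.sub_ne_top (p.apply_ne_top x)
  have hsum (p q : PMF X) : Summable fun x => (p x - q x).toReal :=
    ENNReal.summable_toReal (etv_ne_top p q)
  have habs (x : X) : |(p x).toReal - (q x).toReal| = (p x - q x).toReal + (q x - p x).toReal := by
    rcases le_total (p x) (q x) with h | h
    · rw [abs_sub_comm, abs_of_nonneg (sub_nonneg.2 (ENNReal.toReal_mono (q.apply_ne_top x) h)),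
        ENNReal.toReal_sub_of_le h (q.apply_ne_top x), tsub_eq_zero_of_le h]
      simp
    · rw [abs_of_nonneg (sub_nonneg.2 (ENNReal.toReal_mono (p.apply_ne_top x) h)),
        ENNReal.toReal_sub_of_le h (p.apply_ne_top x), tsub_eq_zero_of_le h]
      simp
  calc tv p q = ((etv p q).toReal + (etv q p).toReal) / 2 := by
        simp only [tv, habs, (hsum p q).tsum_add (hsum q p), etv, ENNReal.tsum_toReal_eq (hfin _ _)]
    _ = (etv p q).toReal := by rw [etv_comm q p, add_self_div_two]

lemma etv_bind_le_expect (P : PMF X) (K K' : X → PMF Y) :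
    etv (P.bind K) (P.bind K') ≤ expect P fun x => etv (K x) (K' x) := by
  simp only [expect, etv, ← ENNReal.tsum_mul_left]
  rw [ENNReal.tsum_comm]
  refine ENNReal.tsum_le_tsum fun y => ?_
  rw [PMF.bind_apply, PMF.bind_apply, tsub_le_iff_right, ← ENNReal.tsum_add]
  refine ENNReal.tsum_le_tsum fun x => ?_
  rw [← mul_add]
  gcongr
  exact le_tsub_add

lemma etv_bind_le_of_forall_le (P : PMF X) {K K' : X → PMF Y} {c : ℝ≥0∞}
    (h : ∀ x, etv (K x) (K' x) ≤ c) : etv (P.bind K) (P.bind K') ≤ c :=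
  calc etv (P.bind K) (P.bind K') ≤ expect P fun x => etv (K x) (K' x) := etv_bind_le_expect P K K'
    _ ≤ expect P fun _ => c := expect_mono P fun x _ => h x
    _ = c := expect_const P c

lemma etv_bind_le_toOuterMeasure (P : PMF X) {K K' : X → PMF Y} {E : Set X}
    (h : ∀ x ∉ E, K x = K' x) : etv (P.bind K) (P.bind K') ≤ P.toOuterMeasure E := by
  classical
  rw [← expect_indicator_one]
  refine (etv_bind_le_expect P K K').trans (expect_mono P fun x _ => ?_)
  by_cases hx : x ∈ E
  · simpa [hx] using etv_le_one (K x) (K' x)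
  · simp [hx, h x hx, etv_self]

lemma etv_bind_bind_le (P P' : PMF X) (K : X → PMF Y) :
    etv (P.bind K) (P'.bind K) ≤ etv P P' := by
  calc etv (P.bind K) (P'.bind K) ≤ ∑' y, ∑' x, (P x - P' x) * K x y := by
        refine ENNReal.tsum_le_tsum fun y => ?_
        rw [PMF.bind_apply, PMF.bind_apply, tsub_le_iff_right, ← ENNReal.tsum_add]
        refine ENNReal.tsum_le_tsum fun x => ?_
        rw [← add_mul]
        gcongr
        exact le_tsub_add
    _ = etv P P' := by
        rw [ENNReal.tsum_comm]
        simp only [ENNReal.tsum_mul_left, PMF.tsum_coe, mul_one, etv]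

end TotalVariation

section UniformOfFintype

open PMF

variable {α β : Type*} [Fintype α] [Nonempty α] [Fintype β] [Nonempty β]

lemma uniformOfFintype_map_equiv (e : α ≃ β) :
    (uniformOfFintype α).map e = uniformOfFintype β := by
  ext b
  rw [map_apply, tsum_eq_single (e.symm b)]
  · simp [Fintype.card_congr e]
  · rintro a ha
    exact if_neg fun h => ha (by simp [h])

lemma uniformOfFintype_prod :
    uniformOfFintype (α × β) =
      (uniformOfFintype α).bind fun a => (uniformOfFintype β).map (Prod.mk a) := by
  ext ⟨a, b⟩
  rw [bind_apply, tsum_eq_single a, map_apply, tsum_eq_single b]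
  · simp [ENNReal.mul_inv]
  · rintro b' hb'
    exact if_neg fun h => hb' (congrArg Prod.snd h).symm
  · rintro a' ha'
    rw [map_apply, ENNReal.tsum_eq_zero.2, mul_zero]
    exact fun b' => if_neg fun h => ha' (congrArg Prod.fst h).symm

lemma uniformOfFintype_map_fst :
    (uniformOfFintype (α × β)).map Prod.fst = uniformOfFintype α := by
  rw [uniformOfFintype_prod, map_bind]
  simp only [map_comp, Function.comp_def]
  exact (congrArg _ (funext fun a => map_const _ a)).trans (bind_pure _)

lemma uniformOfFintype_fin_succ_pi (n : ℕ) :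
    uniformOfFintype (Fin (n + 1) → α) =
      (uniformOfFintype α).bind fun a => (uniformOfFintype (Fin n → α)).map (Fin.cons a) := by
  rw [← uniformOfFintype_map_equiv (Fin.consEquiv fun _ => α), uniformOfFintype_prod, map_bind]
  simp only [map_comp]
  rfl

lemma uniformOfFintype_map_comp_injective {ι κ : Type*} [Fintype ι] [DecidableEq ι]
    [Fintype κ] [DecidableEq κ] {t : ι → κ} (ht : t.Injective) :
    (uniformOfFintype (κ → β)).map (· ∘ t) = uniformOfFintype (ι → β) := by
  let e : ι ⊕ ↥(Set.range t)ᶜ ≃ κ :=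
    ((Equiv.ofInjective t ht).sumCongr (Equiv.refl _)).trans (Equiv.Set.sumCompl _)
  let split : (κ → β) ≃ (ι → β) × (↥(Set.range t)ᶜ → β) :=
    (e.arrowCongr (Equiv.refl β)).symm.trans (Equiv.sumArrowEquivProdArrow _ _ _)
  have hsplit : (· ∘ t) = Prod.fst ∘ split := rfl
  rw [hsplit, ← map_comp, uniformOfFintype_map_equiv, uniformOfFintype_map_fst]

-- `(1 - k² / n) * n ^ k ≤ n.descFactorial k`, multiplied out to avoid subtraction and division.
lemma pow_mul_le_descFactorial (n k : ℕ) :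
    n ^ k * n ≤ n.descFactorial k * n + k ^ 2 * n ^ k := by
  induction k with
  | zero => simp
  | succ k ih =>
    have hD : n.descFactorial k ≤ n ^ k := Nat.descFactorial_le_pow n k
    have hsub : n ≤ (n - k) + k := le_tsub_add
    have hsq : k + k ^ 2 ≤ (k + 1) ^ 2 := by linarith [add_sq k 1]
    rw [Nat.descFactorial_succ, pow_succ]
    calc n ^ k * n * n ≤ (n.descFactorial k * n + k ^ 2 * n ^ k) * n := by gcongr
      _ ≤ (n.descFactorial k * ((n - k) + k) + k ^ 2 * n ^ k) * n := by gcongr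
      _ = (n - k) * n.descFactorial k * n + k * n.descFactorial k * n + k ^ 2 * (n ^ k * n) := by
        ring
      _ ≤ (n - k) * n.descFactorial k * n + k * n ^ k * n + k ^ 2 * (n ^ k * n) := by gcongr
      _ = (n - k) * n.descFactorial k * n + (k + k ^ 2) * (n ^ k * n) := by ring
      _ ≤ (n - k) * n.descFactorial k * n + (k + 1) ^ 2 * (n ^ k * n) := by gcongr

lemma uniformOfFintype_not_injective_le (m : ℕ) :
    (uniformOfFintype (Fin m → α)).toOuterMeasure {t | ¬ t.Injective} ≤
      (m : ℝ≥0∞) ^ 2 / Fintype.card α := by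
  classical
  set N := Fintype.card α
  have hinj : Fintype.card {t : Fin m → α // t.Injective} = N.descFactorial m := by
    rw [Fintype.card_congr (Equiv.subtypeInjectiveEquivEmbedding _ _), Fintype.card_embedding_eq,
      Fintype.card_fin]
  have hcard : N.descFactorial m + Fintype.card {t : Fin m → α // ¬ t.Injective} = N ^ m := by
    rw [← hinj, Fintype.card_subtype_compl, Nat.add_sub_cancel' (Fintype.card_subtype_le _)]
    simp [N]
  have hcount : Fintype.card {t : Fin m → α // ¬ t.Injective} * N ≤ m ^ 2 * N ^ m := by
    nlinarith [pow_mul_le_descFactorial N m]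
  have hN : (N : ℝ≥0∞) ≠ 0 := by simp [N]
  rw [toOuterMeasure_uniformOfFintype_apply, ENNReal.le_div_iff_mul_le (.inl hN) (.inl (by simp)),
    ENNReal.mul_comm_div, ← mul_div_assoc]
  refine ENNReal.div_le_of_le_mul ?_
  rw [Fintype.card_fun, Fintype.card_fin]
  exact_mod_cast hcount

end UniformOfFintype

section Sampling

variable {X Y : Type*}

lemma card_of_mem_support_iid {p : PMF X} {m : ℕ} {S : Multiset X} (hS : S ∈ (iid p m).support) :
    S.card = m := by
  induction m generalizing S with
  | zero =>
    obtain rfl : S = 0 := by simpa [iid] using hS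
    rfl
  | succ n ih =>
    simp only [iid, PMF.mem_support_bind_iff, PMF.mem_support_map_iff] at hS
    obtain ⟨s, hs, x, -, rfl⟩ := hS
    rw [Multiset.card_cons, ih hs]

lemma iid_map (p : PMF X) (f : X → Y) (m : ℕ) :
    (iid p m).map (Multiset.map f) = iid (p.map f) m := by
  induction m with
  | zero => simp [iid, PMF.pure_map]
  | succ n ih =>
    simp only [iid, ← ih, PMF.map_bind, PMF.bind_map, PMF.map_comp, Function.comp_def,
      Multiset.map_cons]

lemma expect_iid_countP (p : PMF X) (φ : X → Prop) [DecidablePred φ] (m : ℕ) :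
    expect (iid p m) (fun S => (S.countP φ : ℝ≥0∞)) = m * p.toOuterMeasure {x | φ x} := by
  have hcons (s : Multiset X) (x : X) :
      ((x ::ₘ s).countP φ : ℝ≥0∞) = s.countP φ + {x | φ x}.indicator 1 x := by
    simp [Multiset.countP_cons, Set.indicator_apply]
  induction m with
  | zero => simp [iid, expect_pure]
  | succ n ih =>
    simp only [iid, expect_bind, expect_map, Function.comp_def, hcons, expect_const_add,
      expect_indicator_one, expect_add_const, ih]
    push_cast
    ring

lemma iid_toOuterMeasure_floor_lt_countP_le (p : PMF X) (φ : X → Prop) [DecidablePred φ] {η : ℝ}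
    (hη : 0 < η) (m : ℕ) :
    (iid p m).toOuterMeasure {S | ⌊η * S.card⌋₊ < S.countP φ} ≤
      p.toOuterMeasure {x | φ x} / ENNReal.ofReal η := by
  obtain rfl | hm := m.eq_zero_or_pos
  · simp [iid, PMF.toOuterMeasure_pure_apply]
  have hη₀ : ENNReal.ofReal η ≠ 0 := (ENNReal.ofReal_pos.2 hη).ne'
  have hm₀ : (m : ℝ≥0∞) ≠ 0 := by exact_mod_cast hm.ne'
  calc (iid p m).toOuterMeasure {S | ⌊η * S.card⌋₊ < S.countP φ}
      ≤ (iid p m).toOuterMeasure {S | m * ENNReal.ofReal η ≤ S.countP φ} := by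
        refine PMF.toOuterMeasure_mono _ ?_
        rintro S ⟨hS, hsupp⟩
        have hlt : η * m < S.countP φ := by
          rw [← card_of_mem_support_iid hsupp]
          exact Nat.lt_of_floor_lt hS
        rw [Set.mem_ofPred_eq, mul_comm, ← ENNReal.ofReal_natCast m, ← ENNReal.ofReal_mul hη.le,
          ← ENNReal.ofReal_natCast (S.countP φ)]
        exact ENNReal.ofReal_le_ofReal hlt.le
    _ ≤ (m * p.toOuterMeasure {x | φ x}) / (m * ENNReal.ofReal η) := by
        rw [← expect_iid_countP]
        exact toOuterMeasure_le_expect_div _ _ (mul_ne_zero hm₀ hη₀)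
          (ENNReal.mul_ne_top (ENNReal.natCast_ne_top m) ENNReal.ofReal_ne_top)
    _ = p.toOuterMeasure {x | φ x} / ENNReal.ofReal η :=
        ENNReal.mul_div_mul_left _ _ hm₀ (ENNReal.natCast_ne_top m)

/-- The distribution of a sample of independent, not necessarily identically distributed draws
from `P 0, …, P (n - 1)`, viewed as a multiset; the recursion mirrors that of `iid`. -/
noncomputable def indepSample : {n : ℕ} → (Fin n → PMF X) → PMF (Multiset X)
  | 0, _ => PMF.pure 0
  | _ + 1, P => (indepSample fun i => P i.succ).bind fun s => (P 0).map fun x => x ::ₘ s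

lemma indepSample_const (p : PMF X) (n : ℕ) : indepSample (fun _ : Fin n => p) = iid p n := by
  induction n with
  | zero => rfl
  | succ n ih => rw [iid, ← ih]; rfl

variable {α : Type*} [Fintype α] [Nonempty α]

lemma indepSample_uniformOfFintype_bind {n : ℕ} (K : Fin n → α → PMF Y) :
    indepSample (fun i => (PMF.uniformOfFintype α).bind (K i)) =
      (PMF.uniformOfFintype (Fin n → α)).bind fun t => indepSample fun i => K i (t i) := by
  induction n with
  | zero => exact (PMF.bind_const _ _).symm
  | succ n ih =>
    rw [uniformOfFintype_fin_succ_pi, PMF.bind_bind]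
    simp only [PMF.bind_map, Function.comp_def, indepSample, Fin.cons_zero,
      Fin.cons_succ, ih, PMF.bind_bind, PMF.map_bind]
    rw [PMF.bind_comm]
    congr with t
    rw [PMF.bind_comm]

variable {β : Type*} [Fintype β] [Nonempty β]

-- Conditionally on the first coordinates, which are pairwise distinct up to the birthday bound, the
-- values at them of a uniformly random function are again independent and uniform.
lemma etv_iid_random_function_le [DecidableEq α] (K : α × β → PMF Y) (m : ℕ) :
    etv (iid ((PMF.uniformOfFintype (α × β)).bind K) m)
      ((PMF.uniformOfFintype (α → β)).bind fun f =>
        iid ((PMF.uniformOfFintype α).bind fun a => K (a, f a)) m) ≤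
      (m : ℝ≥0∞) ^ 2 / Fintype.card α := by
  let sample (t : Fin m → α) (c : Fin m → β) : PMF (Multiset Y) :=
    indepSample fun i => K (t i, c i)
  have hprod : iid ((PMF.uniformOfFintype (α × β)).bind K) m =
      (PMF.uniformOfFintype (Fin m → α)).bind fun t =>
        (PMF.uniformOfFintype (Fin m → β)).bind fun c => sample t c := by
    rw [uniformOfFintype_prod, PMF.bind_bind, ← indepSample_const]
    simp only [PMF.bind_map, indepSample_uniformOfFintype_bind, Function.comp_def, sample]
  have hfun : ((PMF.uniformOfFintype (α → β)).bind fun f =>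
        iid ((PMF.uniformOfFintype α).bind fun a => K (a, f a)) m) =
      (PMF.uniformOfFintype (Fin m → α)).bind fun t =>
        (PMF.uniformOfFintype (α → β)).bind fun f => sample t (f ∘ t) := by
    simp only [← indepSample_const, indepSample_uniformOfFintype_bind]
    rw [PMF.bind_comm]
    rfl
  rw [hprod, hfun]
  refine (etv_bind_le_toOuterMeasure _ fun t ht => ?_).trans (uniformOfFintype_not_injective_le m)
  rw [← uniformOfFintype_map_comp_injective (not_not.1 ht), PMF.bind_map]
  rfl

end Sampling

section Adversary

/-- The points `(i, 2j+2)` selected by `indS`, whose first coordinate reveals the index `i`. -/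
abbrev IsIndicator (x : ℕ × ℕ) : Prop := x.2 % 2 = 0 ∧ 2 ≤ x.2

/-- Replaces every indicator `(i, 2j+2)` by `(0, 2j+2)`, leaving other points unchanged. -/
def eraseIndex (x : ℕ × ℕ) : ℕ × ℕ := if IsIndicator x then (0, x.2) else x

lemma eraseIndex_snd (x : ℕ × ℕ) : (eraseIndex x).2 = x.2 := by
  unfold eraseIndex
  split_ifs <;> rfl

lemma card_indS (S : Multiset (ℕ × ℕ)) : (indS S).card = S.countP IsIndicator :=
  (Multiset.countP_eq_card_filter _ _).symm

lemma card_indS_add_card_noindS (S : Multiset (ℕ × ℕ)) :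
    (indS S).card + (noindS S).card = S.card := by
  rw [← Multiset.card_add]
  exact congrArg _ (Multiset.filter_add_not IsIndicator S)

lemma noindS_map_eraseIndex (S : Multiset (ℕ × ℕ)) : noindS (S.map eraseIndex) = noindS S := by
  simp only [noindS, Multiset.filter_map, Function.comp_def, eraseIndex_snd]
  exact (Multiset.map_congr rfl fun x hx => if_neg (Multiset.mem_filter.1 hx).2).trans
    (Multiset.map_id' _)

lemma Vsub_congr {η : ℝ} {S T : Multiset (ℕ × ℕ)} (hcard : S.card = T.card)
    (hnoind : noindS S = noindS T) (hS : (indS S).card ≤ ⌊η * S.card⌋₊) :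
    Vsub η S = Vsub η T := by
  have hST : (indS S).card = (indS T).card := by
    have hS := card_indS_add_card_noindS S
    have hT := card_indS_add_card_noindS T
    rw [hnoind] at hS
    omega
  have hne : Multiset.powersetCard (S.card - ⌊η * S.card⌋₊) (noindS S) ≠ 0 := by
    have := card_indS_add_card_noindS S
    rw [← Multiset.card_pos, Multiset.card_powersetCard]
    exact Nat.choose_pos (by omega)
  rw [hcard, hST] at hS
  rw [hcard, hnoind] at hne
  simp only [Vsub, hcard, hST, hnoind, hS, if_true, hne, dite_false]

lemma etv_advPush_Vsub_eraseIndex_le (p : PMF (ℕ × ℕ)) {η : ℝ} (hη : 0 < η) (m : ℕ) :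
    etv (advPush (Vsub η) (iid p m)) (advPush (Vsub η) (iid (p.map eraseIndex) m)) ≤
      p.toOuterMeasure {x | IsIndicator x} / ENNReal.ofReal η := by
  rw [← iid_map, advPush, advPush, PMF.bind_map]
  refine (etv_bind_le_toOuterMeasure _ fun S hS => ?_).trans
    (iid_toOuterMeasure_floor_lt_countP_le p IsIndicator hη m)
  exact Vsub_congr (S.card_map _).symm (noindS_map_eraseIndex S).symm
    (card_indS S ▸ not_lt.1 hS)

end Adversary

section IndexedLaw

variable {Y : Type*} [Fintype Y] [Nonempty Y]

/-- The distribution `w 0 · δ_(0,0) + w 1 · U_{a(Y) × {2j+1}} + w 2 · δ_(i,2j+2)` for injective `a`,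
drawn in two stages: `a y` for uniformly random `y`, then one of three points with weights `w`. -/
noncomputable def indexedLaw (w : PMF (Fin 3)) (j : ℕ) (a : Y → ℕ) (i : ℕ) : PMF (ℕ × ℕ) :=
  (PMF.uniformOfFintype Y).bind fun y => w.map ![(0, 0), (a y, 2 * j + 1), (i, 2 * j + 2)]

/-- The weights `(1 - 1/j, 1/j - 1/k, 1/k)` of `p_{i,j,k}`. -/
noncomputable def pijkWeights {j k : ℕ} (hj : 1 ≤ j) (hjk : j < k) : PMF (Fin 3) :=
  PMF.ofFintype ![1 - (j : ℝ≥0∞)⁻¹, (j : ℝ≥0∞)⁻¹ - (k : ℝ≥0∞)⁻¹, (k : ℝ≥0∞)⁻¹] <| by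
    have hkj : (k : ℝ≥0∞)⁻¹ ≤ (j : ℝ≥0∞)⁻¹ := ENNReal.inv_le_inv.2 (by exact_mod_cast hjk.le)
    have hj1 : (j : ℝ≥0∞)⁻¹ ≤ 1 := ENNReal.inv_le_one.2 (by exact_mod_cast hj)
    simp only [Fin.sum_univ_three, Matrix.cons_val]
    rw [add_assoc, tsub_add_cancel_of_le hkj, tsub_add_cancel_of_le hj1]

lemma indexedLaw_map_eraseIndex (w : PMF (Fin 3)) (j : ℕ) (a : Y → ℕ) (i : ℕ) :
    (indexedLaw w j a i).map eraseIndex = indexedLaw w j a 0 := by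
  simp only [indexedLaw, PMF.map_bind, PMF.map_comp]
  refine congrArg _ (funext fun y => congrArg (w.map ·) (funext fun r => ?_))
  fin_cases r <;> simp [eraseIndex, IsIndicator]

lemma indexedLaw_toOuterMeasure_isIndicator (w : PMF (Fin 3)) (j : ℕ) (a : Y → ℕ) (i : ℕ) :
    (indexedLaw w j a i).toOuterMeasure {x | IsIndicator x} = w 2 := by
  have hpre (y : Y) :
      ![(0, 0), (a y, 2 * j + 1), (i, 2 * j + 2)] ⁻¹' {x | IsIndicator x} = {2} := by
    ext r
    fin_cases r <;> simp [IsIndicator]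
  simp only [indexedLaw, PMF.toOuterMeasure_bind_apply, PMF.toOuterMeasure_map_apply, hpre,
    PMF.toOuterMeasure_apply_singleton, ENNReal.tsum_mul_right, PMF.tsum_coe, one_mul]

lemma sum_uniformOfFintype_mul_ite {a : Y → ℕ} (ha : a.Injective) (S : Finset ℕ)
    (hS : S = Finset.univ.image a) (n : ℕ) (x : ℕ × ℕ) :
    ∑ y, PMF.uniformOfFintype Y y * (if x = (a y, n) then 1 else 0) =
      if x.1 ∈ S ∧ x.2 = n then (S.card : ℝ≥0∞)⁻¹ else 0 := by
  have hcard : S.card = Fintype.card Y := hS ▸ Finset.card_image_of_injective _ ha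
  split_ifs with h
  · obtain ⟨h1, h2⟩ := h
    rw [hS] at h1
    obtain ⟨y, -, hy⟩ := Finset.mem_image.1 h1
    rw [Finset.sum_eq_single y _ (by simp)]
    · simp [Prod.ext_iff, hy, h2, hcard]
    · intro y' _ hne
      rw [if_neg, mul_zero]
      exact fun h => hne (ha (by rw [hy, h]))
  · refine Finset.sum_eq_zero fun y _ => ?_
    rw [if_neg, mul_zero]
    rintro rfl
    exact h (by simp [hS])

lemma indexedLaw_isPijk {B : ℕ → Finset ℕ} {i j k : ℕ} (hj : 1 ≤ j) (hjk : j < k) {a : Y → ℕ}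
    (ha : a.Injective) (hB : B i = Finset.univ.image a) :
    IsPijk B i j k (indexedLaw (pijkWeights hj hjk) j a i) := by
  intro x
  have hpoint (y : Y) : (pijkWeights hj hjk).map
      ![(0, 0), (a y, 2 * j + 1), (i, 2 * j + 2)] x =
      (1 - (j : ℝ≥0∞)⁻¹) * (if x = (0, 0) then 1 else 0) +
        ((j : ℝ≥0∞)⁻¹ - (k : ℝ≥0∞)⁻¹) * (if x = (a y, 2 * j + 1) then 1 else 0) +
        (k : ℝ≥0∞)⁻¹ * (if x = (i, 2 * j + 2) then 1 else 0) := by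
    simp only [pijkWeights, PMF.map_apply, PMF.ofFintype_apply, tsum_fintype, Fin.sum_univ_three,
      Matrix.cons_val_zero, Matrix.cons_val_one, Matrix.cons_val, mul_ite, mul_one, mul_zero]
    congr
  have hone : ∑ y, PMF.uniformOfFintype Y y = 1 :=
    (tsum_fintype _).symm.trans (PMF.tsum_coe _)
  rw [indexedLaw, PMF.bind_apply, tsum_fintype, ← sum_uniformOfFintype_mul_ite ha _ hB]
  simp only [hpoint, mul_add, Finset.sum_add_distrib, ← Finset.sum_mul, hone, one_mul,
    mul_left_comm _ ((j : ℝ≥0∞)⁻¹ - (k : ℝ≥0∞)⁻¹), ← Finset.mul_sum]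

lemma etv_advPush_Vsub_indexedLaw_zero_le (w : PMF (Fin 3)) (j : ℕ) (a : Y → ℕ) (i : ℕ) {η : ℝ}
    (hη : 0 < η) (m : ℕ) :
    etv (advPush (Vsub η) (iid (indexedLaw w j a i) m))
      (advPush (Vsub η) (iid (indexedLaw w j a 0) m)) ≤ w 2 / ENNReal.ofReal η := by
  rw [← indexedLaw_map_eraseIndex w j a i, ← indexedLaw_toOuterMeasure_isIndicator w j a i]
  exact etv_advPush_Vsub_eraseIndex_le _ hη m

lemma etv_advPush_Vsub_indexedLaw_le {α β : Type*} [Fintype α] [Nonempty α] [DecidableEq α]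
    [Fintype β] [Nonempty β] (w : PMF (Fin 3)) (j : ℕ) (a : α × β → ℕ) (i : ℕ)
    (i' : (α → β) → ℕ) {η : ℝ} (hη : 0 < η) (m : ℕ) :
    etv (advPush (Vsub η) (iid (indexedLaw w j a i) m))
      (advPush (Vsub η) (metaSample ((PMF.uniformOfFintype (α → β)).map fun f =>
        indexedLaw w j (fun t => a (t, f t)) (i' f)) m)) ≤
      w 2 / ENNReal.ofReal η + (m : ℝ≥0∞) ^ 2 / Fintype.card α + w 2 / ENNReal.ofReal η := by
  let Q (i' : (α → β) → ℕ) : PMF (PMF (ℕ × ℕ)) :=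
    (PMF.uniformOfFintype (α → β)).map fun f => indexedLaw w j (fun t => a (t, f t)) (i' f)
  have herased : etv (advPush (Vsub η) (iid (indexedLaw w j a 0) m))
      (advPush (Vsub η) (metaSample (Q 0) m)) ≤ (m : ℝ≥0∞) ^ 2 / Fintype.card α := by
    refine (etv_bind_bind_le _ _ _).trans ?_
    rw [metaSample, PMF.bind_map]
    exact etv_iid_random_function_le _ m
  have hmixture : etv (advPush (Vsub η) (metaSample (Q 0) m))
      (advPush (Vsub η) (metaSample (Q i') m)) ≤ w 2 / ENNReal.ofReal η := by
    simp only [advPush, metaSample, Q, PMF.bind_map, PMF.bind_bind, Function.comp_def]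
    refine etv_bind_le_of_forall_le _ fun f => ?_
    rw [etv_comm]
    exact etv_advPush_Vsub_indexedLaw_zero_le w j _ _ hη m
  calc _ ≤ _ := etv_triangle _ (advPush (Vsub η) (metaSample (Q 0) m)) _
    _ ≤ _ := add_le_add_left (etv_triangle _ (advPush (Vsub η) (iid (indexedLaw w j a 0) m)) _) _
    _ ≤ _ := by gcongr; exact etv_advPush_Vsub_indexedLaw_zero_le w j a i hη m

lemma tv_advPush_Vsub_indexedLaw_le {α β : Type*} [Fintype α] [Nonempty α] [DecidableEq α]
    [Fintype β] [Nonempty β] (w : PMF (Fin 3)) (j : ℕ) (a : α × β → ℕ) (i : ℕ)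
    (i' : (α → β) → ℕ) {η : ℝ} (hη : 0 < η) (m : ℕ) :
    tv (advPush (Vsub η) (iid (indexedLaw w j a i) m))
      (advPush (Vsub η) (metaSample ((PMF.uniformOfFintype (α → β)).map fun f =>
        indexedLaw w j (fun t => a (t, f t)) (i' f)) m)) ≤
      2 * (w 2).toReal / η + m ^ 2 / Fintype.card α := by
  have hη₀ : ENNReal.ofReal η ≠ 0 := (ENNReal.ofReal_pos.2 hη).ne'
  have hw : w 2 / ENNReal.ofReal η ≠ ⊤ := ENNReal.div_ne_top (w.apply_ne_top 2) hη₀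
  have hm : (m : ℝ≥0∞) ^ 2 / Fintype.card α ≠ ⊤ :=
    ENNReal.div_ne_top (ENNReal.pow_ne_top (ENNReal.natCast_ne_top m)) (by simp)
  rw [tv_eq_toReal_etv]
  refine (ENNReal.toReal_mono (by finiteness)
    (etv_advPush_Vsub_indexedLaw_le w j a i i' hη m)).trans_eq ?_
  rw [ENNReal.toReal_add (by finiteness) hw, ENNReal.toReal_add hw hm, ENNReal.toReal_div,
    ENNReal.toReal_div, ENNReal.toReal_ofReal hη.le, ENNReal.toReal_pow, ENNReal.toReal_natCast,
    ENNReal.toReal_natCast]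
  ring

end IndexedLaw

section Separation

variable {B : ℕ → Finset ℕ} {i i' j k : ℕ} {p q : PMF (ℕ × ℕ)}

lemma IsPijk.apply_odd (hp : IsPijk B i j k p) (a : ℕ) :
    p (a, 2 * j + 1) =
      ((j : ℝ≥0∞)⁻¹ - (k : ℝ≥0∞)⁻¹) * (if a ∈ B i then ((B i).card : ℝ≥0∞)⁻¹ else 0) := by
  simp [hp (a, 2 * j + 1)]

-- On the points `(a, 2j+1)` with `a ∈ B i \ B i'`, a set of `p`-mass at least half of
-- `1/j - 1/k`, the distribution `q` vanishes.
lemma IsPijk.half_le_etv {k' : ℕ} (hp : IsPijk B i j k p) (hq : IsPijk B i' j k' q)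
    (hne : (B i).Nonempty) (hcard : 2 * (B i').card ≤ (B i).card) :
    ((j : ℝ≥0∞)⁻¹ - (k : ℝ≥0∞)⁻¹) / 2 ≤ etv p q := by
  set c := (j : ℝ≥0∞)⁻¹ - (k : ℝ≥0∞)⁻¹
  have hdiff : (2 : ℝ≥0∞)⁻¹ ≤ (B i \ B i').card * ((B i).card : ℝ≥0∞)⁻¹ := by
    have hnat : (B i).card ≤ (B i \ B i').card * 2 := by
      have := Finset.le_card_sdiff (B i') (B i)
      omega
    rw [← div_eq_mul_inv, ENNReal.le_div_iff_mul_le (by simp [hne.ne_empty]) (by simp), mul_comm,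
      ← div_eq_mul_inv]
    exact ENNReal.div_le_of_le_mul (by exact_mod_cast hnat)
  have hpoint : ∀ a ∈ B i \ B i',
      p (a, 2 * j + 1) - q (a, 2 * j + 1) = c * ((B i).card : ℝ≥0∞)⁻¹ := by
    intro a ha
    obtain ⟨ha, ha'⟩ := Finset.mem_sdiff.1 ha
    rw [hp.apply_odd, hq.apply_odd, if_pos ha, if_neg ha', mul_zero, tsub_zero]
  calc c / 2 ≤ c * ((B i \ B i').card * ((B i).card : ℝ≥0∞)⁻¹) := by
        rw [div_eq_mul_inv]
        gcongr
    _ = ∑ x ∈ (B i \ B i') ×ˢ {2 * j + 1}, (p x - q x) := by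
        rw [Finset.sum_product]
        simp only [Finset.sum_singleton]
        rw [Finset.sum_congr rfl hpoint, Finset.sum_const, nsmul_eq_mul]
        ring
    _ ≤ etv p q := ENNReal.sum_le_tsum _

lemma IsPijk.half_le_tv {k' : ℕ} (hp : IsPijk B i j k p) (hq : IsPijk B i' j k' q) (hj : 1 ≤ j)
    (hjk : j < k) (hne : (B i).Nonempty) (hcard : 2 * (B i').card ≤ (B i).card) :
    ((j : ℝ)⁻¹ - (k : ℝ)⁻¹) / 2 ≤ tv p q := by
  have hj₀ : (j : ℝ≥0∞)⁻¹ ≠ ⊤ := ENNReal.inv_ne_top.2 (by exact_mod_cast (by omega : j ≠ 0))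
  have hkj : (k : ℝ≥0∞)⁻¹ ≤ (j : ℝ≥0∞)⁻¹ := ENNReal.inv_le_inv.2 (by exact_mod_cast hjk.le)
  have h := ENNReal.toReal_mono (etv_ne_top p q) (hp.half_le_etv hq hne hcard)
  rw [ENNReal.toReal_div, ENNReal.toReal_sub_of_le hkj hj₀] at h
  simpa [tv_eq_toReal_etv] using h

end Separation

lemma exists_confusing_mixture {B : ℕ → Finset ℕ} (hB : B.Surjective) {g : ℕ → ℕ} {j : ℕ}
    (hj : 1 ≤ j) (hjk : j < g j) {η ε : ℝ} (hη : 0 < η) (hε : 0 < ε) (m : ℕ) :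
    ∃ p ∈ Cg B g, ∃ Q : PMF (PMF (ℕ × ℕ)), Q.support ⊆ Cg B g ∧
      (∀ q ∈ Q.support, ((j : ℝ)⁻¹ - (g j : ℝ)⁻¹) / 2 ≤ tv p q) ∧
      tv (advPush (Vsub η) (iid p m)) (advPush (Vsub η) (metaSample Q m)) ≤
        2 / (g j * η) + ε := by
  obtain ⟨M, hM⟩ := exists_nat_gt ((m : ℝ) ^ 2 / ε)
  have hM₀ : (0 : ℝ) < M := lt_of_le_of_lt (by positivity) hM
  have : NeZero M := ⟨by exact_mod_cast hM₀.ne'⟩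
  let a : Fin M × Bool → ℕ := Encodable.encode
  have ha : a.Injective := Encodable.encode_injective
  have haf (f : Fin M → Bool) : Function.Injective fun t => a (t, f t) :=
    fun t t' h => congrArg Prod.fst (ha h)
  obtain ⟨i, hi⟩ := hB (Finset.univ.image a)
  choose i' hi' using fun f : Fin M → Bool => hB (Finset.univ.image fun t => a (t, f t))
  have hne : (B i).Nonempty := hi ▸ Finset.univ_nonempty.image _
  have hne' (f) : (B (i' f)).Nonempty := hi' f ▸ Finset.univ_nonempty.image _
  have hcard (f) : 2 * (B (i' f)).card ≤ (B i).card := by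
    rw [hi, hi', Finset.card_image_of_injective _ ha, Finset.card_image_of_injective _ (haf f)]
    simp [mul_comm]
  let w := pijkWeights hj hjk
  have hp : IsPijk B i j (g j) (indexedLaw w j a i) := indexedLaw_isPijk hj hjk ha hi
  have hq (f) : IsPijk B (i' f) j (g j) (indexedLaw w j (fun t => a (t, f t)) (i' f)) :=
    indexedLaw_isPijk hj hjk (haf f) (hi' f)
  refine ⟨_, ⟨i, j, hj, hjk, hne, hp⟩, (PMF.uniformOfFintype (Fin M → Bool)).map fun f =>
    indexedLaw w j (fun t => a (t, f t)) (i' f), ?_, ?_, ?_⟩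
  · intro q hqQ
    obtain ⟨f, -, rfl⟩ := (PMF.mem_support_map_iff _ _ _).1 hqQ
    exact ⟨i' f, j, hj, hjk, hne' f, hq f⟩
  · intro q hqQ
    obtain ⟨f, -, rfl⟩ := (PMF.mem_support_map_iff _ _ _).1 hqQ
    exact hp.half_le_tv (hq f) hj hjk hne (hcard f)
  · refine (tv_advPush_Vsub_indexedLaw_le w j a i i' hη m).trans ?_
    have hw : (w 2).toReal = (g j : ℝ)⁻¹ := by simp [w, pijkWeights]
    rw [hw, Fintype.card_fin, ← div_eq_mul_inv, div_div]
    gcongr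
    exact (div_lt_comm₀ hε hM₀).1 hM |>.le

lemma exists_one_le_mul_lt {g : ℕ → ℕ} (hg : ¬ BddAbove (Set.range fun n => (g n : ℝ) / n)) {c : ℝ}
    (hc : 0 ≤ c) : ∃ j : ℕ, 1 ≤ j ∧ c * j < g j := by
  obtain ⟨_, ⟨j, rfl⟩, hj⟩ := not_bddAbove_iff.1 hg c
  have hj₀ : j ≠ 0 := by
    rintro rfl
    simp [hc.not_gt] at hj
  have hj_pos : (0 : ℝ) < j := by exact_mod_cast hj₀.bot_lt
  exact ⟨j, Nat.one_le_iff_ne_zero.2 hj₀, (lt_div_iff₀ hj_pos).1 hj⟩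

theorem stmt6_general (B : ℕ → Finset ℕ) (hB : Function.Surjective B) (g : ℕ → ℕ)
    (hg : ¬ BddAbove (Set.range fun n => (g n : ℝ) / n)) (α : ℝ) {ζ : ℝ} (hζ : 0 < ζ) :
    ∃ η γ' : ℝ, η ∈ Set.Ioo (0 : ℝ) 1 ∧ γ' ∈ Set.Ioo (0 : ℝ) 1 ∧
      ∀ m : ℕ,
        ∃ p ∈ Cg B g, ∃ Q : PMF (PMF (ℕ × ℕ)), Q.support ⊆ Cg B g ∧
          (∀ q ∈ Q.support, 4 * α * η + 4 * γ' ≤ tv p q) ∧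
          tv (advPush (Vsub η) (iid p m)) (advPush (Vsub η) (metaSample Q m)) ≤ ζ := by
  let A := max α 1
  have hA : 1 ≤ A := le_max_right α 1
  obtain ⟨j, hj, hgj⟩ := exists_one_le_mul_lt hg (c := 2 + 128 * A / ζ) (by positivity)
  have hj₁ : (1 : ℝ) ≤ j := by exact_mod_cast hj
  have hAζ : 0 ≤ 128 * A / ζ * j := by positivity
  have hgj_two : 2 * (j : ℝ) ≤ g j := by linarith
  have hgj_ζ : 128 * A / ζ * j ≤ g j := by linarith
  have hjk : j < g j := by
    rw [← Nat.cast_lt (α := ℝ)]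
    linarith
  let η := 1 / (32 * A * j)
  let γ' := 1 / (32 * (j : ℝ))
  have hη : 0 < η := by positivity
  have hsmall : 4 * α * η + 4 * γ' ≤ ((j : ℝ)⁻¹ - (g j : ℝ)⁻¹) / 2 :=
    calc 4 * α * η + 4 * γ' ≤ 4 * A * η + 4 * γ' := by gcongr; exact le_max_left α 1
      _ = ((j : ℝ)⁻¹ - (2 * j : ℝ)⁻¹) / 2 := by simp only [η, γ']; field_simp; norm_num
      _ ≤ ((j : ℝ)⁻¹ - (g j : ℝ)⁻¹) / 2 := by gcongr
  have herase : 2 / (g j * η) ≤ ζ / 2 :=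
    calc 2 / (g j * η) ≤ 2 / (128 * A / ζ * j * η) := by gcongr
      _ = ζ / 2 := by simp only [η]; field_simp; norm_num
  refine ⟨η, γ', ⟨hη, ?_⟩, ⟨by positivity, ?_⟩, fun m => ?_⟩
  · exact (div_lt_one (by positivity)).2 (by nlinarith)
  · exact (div_lt_one (by positivity)).2 (by linarith)
  obtain ⟨p, hp, Q, hQ, hsep, hclose⟩ := exists_confusing_mixture hB hj hjk hη (half_pos hζ) m
  exact ⟨p, hp, Q, hQ, fun q hq => hsmall.trans (hsep q hq), by linarith⟩

/-- For every superlinear `g` and every `α ≥ 1` there are `η, γ' ∈ (0,1)`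
such that for every `m ≥ 1` there are `p ∈ C_g` and a meta-distribution `Q` over `C_g` with
`d_TV(p,q) ≥ 4αη + 4γ'` for all `q` in the support of `Q`, and
`d_TV(V_{sub,η}(p^m), V_{sub,η}(|Q|^m)) ≤ 1/8`. -/
theorem stmt6 (B : ℕ → Finset ℕ) (hB : Function.Surjective B)
    (g : ℕ → ℕ) (hg : Superlinear g) (α : ℝ) (hα : 1 ≤ α) :
    ∃ η γ' : ℝ, η ∈ Set.Ioo (0 : ℝ) 1 ∧ γ' ∈ Set.Ioo (0 : ℝ) 1 ∧
      ∀ m : ℕ, 1 ≤ m →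
        ∃ p ∈ Cg B g, ∃ Q : PMF (PMF (ℕ × ℕ)), Q.support ⊆ Cg B g ∧
          (∀ q ∈ Q.support, 4 * α * η + 4 * γ' ≤ tv p q) ∧
          tv (advPush (Vsub η) (iid p m)) (advPush (Vsub η) (metaSample Q m)) ≤ 1 / 8 := by
  obtain ⟨η, γ', hη, hγ', h⟩ := stmt6_general B hB g
    (Filter.not_bddAbove_of_tendsto_atTop hg) α (ζ := 1 / 8) (by norm_num)
  exact ⟨η, γ', hη, hγ', fun m _ => h m⟩
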